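/- Let t ≥ 3 be an integer and let G be a graph with average degree d(G) ≥ 2t − 4 such that every proper minor of G has average degree strictly less than 2t − 4. Then every edge of G lies in at least t − 2 triangles. -/

import Mathlib

/-!
The edge `uv` is contracted: with `n` vertices, `m` edges and `c` common neighbours of `u` and `v`,
the contraction has `n - 1` vertices and at least `m - 1 - c` edges, since the only edges lost are
`uv` and one of the two edges to each common neighbour (`card_edgeSet_le_contract`).
The hypothesis on `G` says `m ≥ (t - 2) n`. If `c ≤ t - 3`, the contraction thus has at least
`(t - 2) n - (t - 2) = (t - 2)(n - 1)` edges, so its average degree is at least `2 t - 4`, although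
it is a proper minor of `G` (`hasMinor_contract`).
-/

open SimpleGraph

/-- `H` is a minor of `G`: there is a family of nonempty, connected,
pairwise disjoint branch sets in `G`, one for each vertex of `H`, with an
edge of `G` between the branch sets of any two adjacent vertices of `H`. -/
def HasMinor {V : Type*} {W : Type*} (G : SimpleGraph V) (H : SimpleGraph W) : Prop :=
  ∃ φ : W → Set V,
    (∀ w, (φ w).Nonempty) ∧
    (∀ w, (G.induce (φ w)).Connected) ∧
    (Pairwise fun w w' => Disjoint (φ w) (φ w')) ∧
    (∀ ⦃w w'⦄, H.Adj w w' → ∃ u ∈ φ w, ∃ v ∈ φ w', G.Adj u v)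

/-- The average degree `2|E(G)|/|V(G)|` of a graph. -/
noncomputable def avgDeg {V : Type*} (G : SimpleGraph V) : ℝ :=
  2 * Nat.card G.edgeSet / Nat.card V

/-- `f(H)`: the infimum of all `D` such that every (finite) graph with average
degree at least `D` contains `H` as a minor. -/
noncomputable def minorF {W : Type*} (H : SimpleGraph W) : ℝ :=
  sInf {D : ℝ | ∀ (V : Type) [Fintype V], ∀ G : SimpleGraph V, D ≤ avgDeg G → HasMinor G H}

/-- `H` is a proper minor of `G`: a minor of `G` that is not isomorphic to `G`
(i.e. obtained by at least one vertex deletion, edge deletion or edge contraction). -/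
def IsProperMinor {V : Type*} {W : Type*} (G : SimpleGraph V) (H : SimpleGraph W) : Prop :=
  HasMinor G H ∧ ¬ Nonempty (H ≃g G)

/-- The simple graph obtained from `G` by identifying `v` with `u`. Its vertices are those of `G`
other than `v`, and `u` takes over the neighbours of `v`. When `G.Adj u v`, this is the contraction
of the edge `uv`. -/
def contract {V : Type*} (G : SimpleGraph V) (u v : V) : SimpleGraph {x : V // x ≠ v} where
  Adj a b := a ≠ b ∧ (G.Adj a b ∨ (a.1 = u ∧ G.Adj v b) ∨ (b.1 = u ∧ G.Adj v a))
  symm := ⟨fun a b ⟨h, h'⟩ => ⟨h.symm, by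
    rcases h' with h' | h' | h'
    · exact Or.inl h'.symm
    · exact Or.inr (Or.inr h')
    · exact Or.inr (Or.inl h')⟩⟩
  loopless := ⟨fun a h => h.1 rfl⟩

theorem hasMinor_contract {V : Type*} {G : SimpleGraph V} {u v : V} (h : G.Adj u v) :
    HasMinor G (contract G u v) := by
  refine ⟨fun w => {x | x = w.1 ∨ (w.1 = u ∧ x = v)}, fun w => ⟨w.1, Or.inl rfl⟩, ?_, ?_, ?_⟩
  · intro w
    beta_reduce
    by_cases hw : w.1 = u
    · have : {x | x = w.1 ∨ (w.1 = u ∧ x = v)} = {u, v} := by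
        ext x
        simp [hw]
      rw [this]
      exact induce_pair_connected_of_adj h
    · have : {x | x = w.1 ∨ (w.1 = u ∧ x = v)} = {w.1} := by
        ext x
        simp [hw]
      rw [this]
      exact Connected.of_subsingleton
  · intro w w' hne
    have hne' : w.1 ≠ w'.1 := fun e => hne (Subtype.ext e)
    have := w.2
    have := w'.2
    rw [Set.disjoint_left]
    rintro x (rfl | ⟨h1, rfl⟩) (h2 | ⟨h2, h3⟩)
    all_goals simp_all
  · rintro a b ⟨-, hab | ⟨ha, hab⟩ | ⟨hb, hab⟩⟩
    · exact ⟨a, Or.inl rfl, b, Or.inl rfl, hab⟩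
    · exact ⟨v, Or.inr ⟨ha, rfl⟩, b, Or.inl rfl, hab⟩
    · exact ⟨a, Or.inl rfl, v, Or.inr ⟨hb, rfl⟩, hab.symm⟩

/-- Identifying `v` with `u` loses at most one edge for the pair `uv` and one for each common
neighbour. -/
theorem card_edgeSet_le_contract {V : Type*} [Finite V] (G : SimpleGraph V) {u v : V}
    (huv : u ≠ v) :
    Nat.card G.edgeSet ≤ Nat.card (contract G u v).edgeSet +
      (Nat.card ↥(G.neighborSet u ∩ G.neighborSet v) + 1) := by
  classical
  -- An edge of the contraction is lifted to itself if `G` has it, and otherwise `u` is replaced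
  -- by `v`. The only edges of `G` missed are `s(v, x)` with `x = u` or `x` a common neighbour.
  let g : Sym2 {x : V // x ≠ v} → Sym2 V := fun e =>
    if e.map Subtype.val ∈ G.edgeSet then e.map Subtype.val
    else e.map fun x => if x.1 = u then v else x.1
  let lost : Set V := insert u (G.neighborSet u ∩ G.neighborSet v)
  have hv : ∀ x, G.Adj v x →
      s(v, x) ∈ g '' (contract G u v).edgeSet ∪ (fun x => s(v, x)) '' lost := by
    intro x hx
    by_cases hl : x ∈ lost
    · exact Or.inr ⟨x, hl, rfl⟩
    · have hxu : x ≠ u := fun e => hl (Or.inl e)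
      have hux : ¬ G.Adj u x := fun e => hl (Or.inr ⟨e, hx⟩)
      refine Or.inl ⟨s(⟨u, huv⟩, ⟨x, hx.ne'⟩), ?_, ?_⟩
      · exact ⟨fun e => hxu (congrArg Subtype.val e).symm, Or.inr (Or.inl ⟨rfl, hx⟩)⟩
      · simp [g, hux, hxu]
  have hcover : G.edgeSet ⊆ g '' (contract G u v).edgeSet ∪ (fun x => s(v, x)) '' lost := by
    intro e
    induction e using Sym2.ind with
    | _ a b =>
      intro hab
      rw [mem_edgeSet] at hab
      by_cases ha : a = v
      · subst ha
        exact hv b hab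
      by_cases hb : b = v
      · subst hb
        rw [Sym2.eq_swap]
        exact hv a hab.symm
      refine Or.inl ⟨s(⟨a, ha⟩, ⟨b, hb⟩), ?_, ?_⟩
      · exact ⟨fun e => hab.ne (congrArg Subtype.val e), Or.inl hab⟩
      · simp [g, hab]
  simp only [Nat.card_coe_set_eq]
  calc G.edgeSet.ncard
      ≤ (g '' (contract G u v).edgeSet ∪ (fun x => s(v, x)) '' lost).ncard :=
        Set.ncard_le_ncard hcover (Set.toFinite _)
    _ ≤ (g '' (contract G u v).edgeSet).ncard + ((fun x => s(v, x)) '' lost).ncard :=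
        Set.ncard_union_le _ _
    _ ≤ _ := by
        gcongr
        · exact Set.ncard_image_le (Set.toFinite _)
        · exact (Set.ncard_image_le (Set.toFinite _)).trans (Set.ncard_insert_le _ _)

/-- Let `t ≥ 3` and let `G` be a graph with average degree
`d(G) ≥ 2t − 4` such that every proper minor of `G` has average degree strictly less
than `2t − 4`. Then every edge of `G` lies in at least `t − 2` triangles, i.e. the
endpoints of every edge have at least `t − 2` common neighbours. -/
theorem statement10 (t : ℕ) (ht : 3 ≤ t) (V : Type) [Fintype V] (G : SimpleGraph V)
    (hG : (2 * t - 4 : ℝ) ≤ avgDeg G)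
    (hmin : ∀ (W : Type) [Fintype W], ∀ H : SimpleGraph W,
        IsProperMinor G H → avgDeg H < 2 * t - 4) :
    ∀ u v, G.Adj u v → t - 2 ≤ Nat.card ↥(G.neighborSet u ∩ G.neighborSet v) := by
  classical
  intro u v huv
  by_contra! hc
  have hcard : Nat.card {x : V // x ≠ v} + 1 = Nat.card V := by
    have := Fintype.card_pos_iff.2 ⟨v⟩
    simp only [Nat.card_eq_fintype_card, Fintype.card_subtype_compl, Fintype.card_unique, ne_eq]
    omega
  have hpos : 0 < Nat.card {x : V // x ≠ v} :=
    Nat.card_pos_iff.2 ⟨⟨⟨u, huv.ne⟩⟩, inferInstance⟩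
  have hlt := hmin _ (contract G u v) ⟨hasMinor_contract huv, fun ⟨e⟩ => by
    have := Nat.card_congr e.toEquiv
    omega⟩
  have hE := card_edgeSet_le_contract G huv.ne
  have hE' : Nat.card G.edgeSet + 2 ≤ Nat.card (contract G u v).edgeSet + t := by omega
  have hER : (Nat.card G.edgeSet : ℝ) + 2 ≤ Nat.card (contract G u v).edgeSet + t := by
    exact_mod_cast hE'
  have hcR : (Nat.card {x : V // x ≠ v} : ℝ) + 1 = Nat.card V := by exact_mod_cast hcard
  have hpR : (0 : ℝ) < Nat.card {x : V // x ≠ v} := by exact_mod_cast hpos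
  unfold avgDeg at hG hlt
  rw [le_div_iff₀ (by linarith), ← hcR] at hG
  rw [div_lt_iff₀ hpR] at hlt
  linarith
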